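/- arXiv:0905.3827 — 3 statements merged into one kernel-verified Lean document; each statement's English description precedes it below -/
import Mathlib

section
/- Let (R,ν) be a filtered ring with a set of vertices P, and let (M,μ) be a filtered left R-module. If (m_i)_{i∈I}, with m_i ∈ p_{n_i}M for some p_{n_i} ∈ P, is a left P-μ-independent family, then the submodule Σ_{i∈I} R m_i of M is projective; indeed the natural epimorphism ⊕_{i∈I} R p_{n_i} → Σ_{i∈I} R m_i sending (r_i)_{i∈I} to Σ_{i∈I} r_i m_i is an isomorphism. -/
namespace LPA

variable {R : Type} [Ring R] {M : Type} [AddCommGroup M] [Module R M]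

/-- A filtration on a ring `R`: a degree function `ν : R → ℕ ∪ {-∞}`. -/
structure IsRingFiltration (ν : R → WithBot ℕ) : Prop where
  map_zero : ν 0 = ⊥
  nonneg : ∀ r : R, r ≠ 0 → 0 ≤ ν r
  sub_le : ∀ r s : R, ν (r - s) ≤ max (ν r) (ν s)
  mul_le : ∀ r s : R, ν (r * s) ≤ ν r + ν s
  map_one : ν 1 = 0

/-- A set of vertices in a filtered ring: a finite set of zero-degree, pairwise orthogonal
idempotents summing to `1`. -/
structure IsVertexSet (ν : R → WithBot ℕ) (P : Finset R) : Prop where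
  idem : ∀ p ∈ P, p * p = p
  deg_eq_zero : ∀ p ∈ P, ν p = 0
  orthogonal : ∀ p ∈ P, ∀ q ∈ P, p ≠ q → p * q = 0
  sum_eq_one : ∑ p ∈ P, p = 1

/-- A filtration on a module over a filtered ring. -/
structure IsModuleFiltration (ν : R → WithBot ℕ) (μ : M → WithBot ℕ) : Prop where
  map_zero : μ 0 = ⊥
  nonneg : ∀ m : M, m ≠ 0 → 0 ≤ μ m
  sub_le : ∀ m n : M, μ (m - n) ≤ max (μ m) (μ n)
  smul_le : ∀ (r : R) (m : M), μ (r • m) ≤ ν r + μ m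

/-- The family `(m i)`, with `m i ∈ (n i)•M`, is left `P`-`μ`-dependent: some `m i = 0`, or
there is a finitely supported family `(r i)` with `r i ∈ R·(n i)` such that the degree of
`∑ r i • m i` is strictly smaller than its formal degree `max (ν (r i) + μ (m i))`. -/
def DepFamily (ν : R → WithBot ℕ) (μ : M → WithBot ℕ) {I : Type} (n : I → R) (m : I → M) :
    Prop :=
  (∃ i, m i = 0) ∨ ∃ r : I →₀ R, (∀ i, r i * n i = r i) ∧
    μ (r.sum fun i ri => ri • m i) < r.support.sup fun i => ν (r i) + μ (m i)

/-- The element `x` is left `P`-`μ`-dependent on the family `(m i)`. -/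
def DepOn (ν : R → WithBot ℕ) (μ : M → WithBot ℕ) {I : Type} (n : I → R) (m : I → M)
    (x : M) : Prop :=
  x = 0 ∨ ∃ r : I →₀ R, (∀ i, r i * n i = r i) ∧
    μ (x - r.sum fun i ri => ri • m i) < μ x ∧ ∀ i, ν (r i) + μ (m i) ≤ μ x

/-- The element `x` is left `P`-`μ`-dependent on the set `S`. -/
def DepOnSet (ν : R → WithBot ℕ) (μ : M → WithBot ℕ) (P : Finset R) (S : Set M) (x : M) :
    Prop :=
  ∃ (I : Type) (n : I → R) (m : I → M), (∀ i, n i ∈ P) ∧ (∀ i, ∃ s ∈ S, m i = n i • s) ∧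
    DepOn ν μ n m x

/-- `M` satisfies the weak algorithm relative to `μ` and `P`: in every finite left
`P`-`μ`-dependent family with weakly increasing degrees, some member is left
`P`-`μ`-dependent on the preceding ones. -/
def WeakAlgorithm (ν : R → WithBot ℕ) (P : Finset R) (μ : M → WithBot ℕ) : Prop :=
  ∀ (ℓ : ℕ) (n : Fin ℓ → R) (m : Fin ℓ → M),
    (∀ i, n i ∈ P) → (∀ i, n i • m i = m i) →
    (∀ i j : Fin ℓ, i ≤ j → μ (m i) ≤ μ (m j)) →
    DepFamily ν μ n m →
    ∃ i : Fin ℓ, DepOn ν μ (fun j : {j : Fin ℓ // j < i} => n j.1)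
      (fun j : {j : Fin ℓ // j < i} => m j.1) (m i)

/-- A weak `P`-`μ`-basis for `M`. -/
def IsWeakBasis (ν : R → WithBot ℕ) (P : Finset R) (μ : M → WithBot ℕ) (B : Set M) : Prop :=
  (∀ b ∈ B, ∃ p ∈ P, ∃ m : M, b = p • m) ∧
  (∀ x : M, DepOnSet ν μ P B x) ∧
  (∀ b ∈ B, ¬ DepOnSet ν μ P (B \ {b}) b)

end LPA

/-! The modules `R·(n i)` are direct summands of `R`, so `⨁ R·(n i)` is a direct summand of the free
module `I →₀ R`, hence projective. Independence says that no term `r i • m i` of a sum has formal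
degree above the degree of the sum. Since only `0` has degree `⊥`, a family `r` in `⨁ R·(n i)` with
`∑ r i • m i = 0` vanishes, so `r ↦ ∑ r i • m i` maps `⨁ R·(n i)` isomorphically onto
`∑ R·(m i)`. -/

namespace LPA

section LeftIdealSum

variable {R M I : Type*} [Semiring R] [AddCommMonoid M] [Module R M]

theorem projective_of_isProj [Module.Projective R M] {S : Submodule R M} {f : M →ₗ[R] M}
    (hf : LinearMap.IsProj S f) : Module.Projective R S :=
  .of_split S.subtype hf.codRestrict (LinearMap.ext hf.codRestrict_apply_cod)

/-- The external direct sum `⨁ i, R·(n i)` for idempotents `n i`, encoded as the submodule of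
`I →₀ R` of the families fixed by coordinatewise right multiplication by `n`. -/
def leftIdealSum (n : I → R) : Submodule R (I →₀ R) where
  carrier := {r | ∀ i, r i * n i = r i}
  zero_mem' i := zero_mul (n i)
  add_mem' hr hs i := by rw [Finsupp.add_apply, add_mul, hr i, hs i]
  smul_mem' a r hr i := by rw [Finsupp.smul_apply, smul_mul_assoc, hr i]

/-- Coordinatewise right multiplication by `n` on `I →₀ R`, the projection onto `leftIdealSum n`
when every `n i` is idempotent. -/
noncomputable def finsuppMulRight (n : I → R) : (I →₀ R) →ₗ[R] (I →₀ R) :=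
  Finsupp.linearCombination R fun i => Finsupp.single i (n i)

theorem finsuppMulRight_apply (n : I → R) (r : I →₀ R) (i : I) :
    finsuppMulRight n r i = r i * n i := by
  classical
  simp +contextual [finsuppMulRight, Finsupp.linearCombination_apply, Finsupp.sum,
    Finsupp.single_apply]

theorem isProj_finsuppMulRight {n : I → R} (hn : ∀ i, IsIdempotentElem (n i)) :
    LinearMap.IsProj (leftIdealSum n) (finsuppMulRight n) where
  map_mem r i := by rw [finsuppMulRight_apply, mul_assoc, hn i]
  map_id r hr := Finsupp.ext fun i => (finsuppMulRight_apply n r i).trans (hr i)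

theorem projective_leftIdealSum {n : I → R} (hn : ∀ i, IsIdempotentElem (n i)) :
    Module.Projective R (leftIdealSum n) :=
  projective_of_isProj (isProj_finsuppMulRight hn)

theorem linearCombination_comp_finsuppMulRight {n : I → R} {m : I → M}
    (hm : ∀ i, n i • m i = m i) :
    Finsupp.linearCombination R m ∘ₗ finsuppMulRight n = Finsupp.linearCombination R m := by
  ext i
  simp [finsuppMulRight, hm]

theorem map_linearCombination_leftIdealSum {n : I → R} {m : I → M}
    (hn : ∀ i, IsIdempotentElem (n i)) (hm : ∀ i, n i • m i = m i) :
    (leftIdealSum n).map (Finsupp.linearCombination R m) = Submodule.span R (Set.range m) := by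
  rw [← (isProj_finsuppMulRight hn).range, ← LinearMap.range_comp,
    linearCombination_comp_finsuppMulRight hm, Finsupp.range_linearCombination]

end LeftIdealSum

section Span

variable {R M I : Type*} [Ring R] [AddCommGroup M] [Module R M] {n : I → R} {m : I → M}

/-- The natural map `⨁ R·(n i) → ∑ R·(m i)`, `r ↦ ∑ r i • m i`, as an isomorphism when it has
trivial kernel. -/
noncomputable def leftIdealSumEquivSpan (hn : ∀ i, IsIdempotentElem (n i))
    (hm : ∀ i, n i • m i = m i)
    (hker : ∀ r ∈ leftIdealSum n, Finsupp.linearCombination R m r = 0 → r = 0) :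
    leftIdealSum n ≃ₗ[R] Submodule.span R (Set.range m) :=
  LinearEquiv.ofInjective ((Finsupp.linearCombination R m).domRestrict (leftIdealSum n))
      ((injective_iff_map_eq_zero _).mpr fun r hr => Subtype.ext (hker r r.2 hr)) ≪≫ₗ
    LinearEquiv.ofEq _ _
      ((LinearMap.range_domRestrict _ _).trans (map_linearCombination_leftIdealSum hn hm))

end Span

section Independence

variable {R M I : Type} [Ring R] [AddCommGroup M] [Module R M]
  {ν : R → WithBot ℕ} {μ : M → WithBot ℕ} {n : I → R} {m : I → M} {r : I →₀ R}

theorem degree_term_le_degree_sum (hindep : ¬ DepFamily ν μ n m) (hr : r ∈ leftIdealSum n)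
    {i : I} (hi : r i ≠ 0) :
    ν (r i) + μ (m i) ≤ μ (Finsupp.linearCombination R m r) :=
  (Finset.le_sup (f := fun j => ν (r j) + μ (m j)) (Finsupp.mem_support_iff.mpr hi)).trans
    (not_lt.mp fun hlt => hindep (Or.inr ⟨r, hr, hlt⟩))

theorem eq_zero_of_linearCombination_eq_zero (hν : IsRingFiltration ν)
    (hμ : IsModuleFiltration ν μ) (hindep : ¬ DepFamily ν μ n m) (hr : r ∈ leftIdealSum n)
    (hsum : Finsupp.linearCombination R m r = 0) : r = 0 := by
  by_contra hne
  obtain ⟨i, hi⟩ : ∃ i, r i ≠ 0 := Finsupp.ne_iff.mp hne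
  have hmi : m i ≠ 0 := fun h => hindep (Or.inl ⟨i, h⟩)
  have hle : (0 : WithBot ℕ) ≤ ⊥ := calc
    0 ≤ ν (r i) + μ (m i) := add_nonneg (hν.nonneg _ hi) (hμ.nonneg _ hmi)
    _ ≤ μ (Finsupp.linearCombination R m r) := degree_term_le_degree_sum hindep hr hi
    _ = ⊥ := by rw [hsum, hμ.map_zero]
  exact (WithBot.bot_lt_coe 0).not_ge hle

end Independence

end LPA

open LPA in
theorem statement_1_general {R M : Type} [Ring R] [AddCommGroup M] [Module R M]
    (ν : R → WithBot ℕ) (μ : M → WithBot ℕ)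
    (hν : IsRingFiltration ν) (hμ : IsModuleFiltration ν μ)
    {I : Type} (n : I → R) (m : I → M)
    (hn : ∀ i, IsIdempotentElem (n i)) (hm : ∀ i, n i • m i = m i)
    (hindep : ¬ DepFamily ν μ n m) :
    Module.Projective R ↥(Submodule.span R (Set.range m)) ∧
      ∀ r : I →₀ R, (∀ i, r i * n i = r i) →
        (r.sum fun i ri => ri • m i) = 0 → r = 0 := by
  have hker : ∀ r ∈ leftIdealSum n, Finsupp.linearCombination R m r = 0 → r = 0 :=
    fun _ => eq_zero_of_linearCombination_eq_zero hν hμ hindep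
  have := projective_leftIdealSum hn
  exact ⟨.of_equiv' (leftIdealSumEquivSpan hn hm hker), hker⟩

open LPA in
/-- A left `P`-`μ`-independent family `(m i)`, with `m i ∈ (n i)•M` for vertices
`n i ∈ P`, generates a projective submodule `∑ R·(m i)`; indeed the natural epimorphism
`⊕ R·(n i) → ∑ R·(m i)`, `(r i) ↦ ∑ r i • m i`, is an isomorphism (equivalently, injective). -/
theorem statement_1 {R M : Type} [Ring R] [AddCommGroup M] [Module R M]
    (ν : R → WithBot ℕ) (μ : M → WithBot ℕ) (P : Finset R)
    (hν : IsRingFiltration ν) (hP : IsVertexSet ν P) (hμ : IsModuleFiltration ν μ)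
    {I : Type} (n : I → R) (m : I → M)
    (hn : ∀ i, n i ∈ P) (hm : ∀ i, n i • m i = m i)
    (hindep : ¬ DepFamily ν μ n m) :
    Module.Projective R ↥(Submodule.span R (Set.range m)) ∧
      ∀ r : I →₀ R, (∀ i, r i * n i = r i) →
        (r.sum fun i ri => ri • m i) = 0 → r = 0 :=
  statement_1_general ν μ hν hμ n m (fun i => hP.idem _ (hn i)) hm hindep
end

section
/- Let E be a finite quiver with vertex set {1,…,d} and let M be a free left P_k(E)-module freely generated by a set B. Given any map μ: B → ℕ, extend μ to M as the formal degree: for m = Σ_{b∈B} r_b b (unique expression), μ(m) = max_b(ν(r_b)+μ(b)), where ν is the path-length degree on P_k(E). Then (M,μ) is a filtered P_k(E)-module and M satisfies the weak algorithm relative to μ and the set of vertices P = {p_1,…,p_d}. -/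
namespace LPA

/-- A finite quiver: finite sets of vertices and arrows with source and target maps. -/
structure FinQuiver : Type 1 where
  V : Type
  A : Type
  [fintypeV : Fintype V]
  [decEqV : DecidableEq V]
  [fintypeA : Fintype A]
  [decEqA : DecidableEq A]
  src : A → V
  tgt : A → V

attribute [instance] FinQuiver.fintypeV FinQuiver.decEqV FinQuiver.fintypeA FinQuiver.decEqA

/-- The inverse quiver: all arrows reversed. -/
def FinQuiver.rev (Q : FinQuiver) : FinQuiver where
  V := Q.V
  A := Q.A
  fintypeV := Q.fintypeV
  decEqV := Q.decEqV
  fintypeA := Q.fintypeA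
  decEqA := Q.decEqA
  src := Q.tgt
  tgt := Q.src

/-- Generators of the path algebra: a trivial path `p v` for each vertex and an arrow `e` for
each arrow. -/
inductive PathGen (Q : FinQuiver) : Type
  | vertex (v : Q.V) : PathGen Q
  | edge (e : Q.A) : PathGen Q

/-- Defining relations of the path algebra: the trivial paths are pairwise orthogonal
idempotents summing to `1`, and `p (src e) * e = e = e * p (tgt e)`. -/
inductive PathRel (k : Type) [CommRing k] (Q : FinQuiver) :
    FreeAlgebra k (PathGen Q) → FreeAlgebra k (PathGen Q) → Prop
  | vertex_mul_self (v : Q.V) :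
      PathRel k Q (FreeAlgebra.ι k (PathGen.vertex v) * FreeAlgebra.ι k (PathGen.vertex v))
        (FreeAlgebra.ι k (PathGen.vertex v))
  | vertex_mul_ne (v w : Q.V) (h : v ≠ w) :
      PathRel k Q (FreeAlgebra.ι k (PathGen.vertex v) * FreeAlgebra.ι k (PathGen.vertex w)) 0
  | sum_vertex :
      PathRel k Q (∑ v : Q.V, FreeAlgebra.ι k (PathGen.vertex v)) 1
  | src_mul (e : Q.A) :
      PathRel k Q
        (FreeAlgebra.ι k (PathGen.vertex (Q.src e)) * FreeAlgebra.ι k (PathGen.edge e))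
        (FreeAlgebra.ι k (PathGen.edge e))
  | mul_tgt (e : Q.A) :
      PathRel k Q
        (FreeAlgebra.ι k (PathGen.edge e) * FreeAlgebra.ι k (PathGen.vertex (Q.tgt e)))
        (FreeAlgebra.ι k (PathGen.edge e))

/-- The path algebra `P_k(Q)` of a finite quiver `Q`, presented by generators and relations. -/
def PathAlg (k : Type) [CommRing k] (Q : FinQuiver) : Type :=
  RingQuot (PathRel k Q)

variable (k : Type) [CommRing k] (Q : FinQuiver)

noncomputable instance : Ring (PathAlg k Q) :=
  inferInstanceAs (Ring (RingQuot (PathRel k Q)))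

noncomputable instance : Algebra k (PathAlg k Q) :=
  inferInstanceAs (Algebra k (RingQuot (PathRel k Q)))

/-- The quotient map from the free algebra onto the path algebra. -/
noncomputable def PathAlg.mk : FreeAlgebra k (PathGen Q) →ₐ[k] PathAlg k Q :=
  RingQuot.mkAlgHom k (PathRel k Q)

/-- The trivial path (vertex idempotent) `p v` in the path algebra. -/
noncomputable def PathAlg.p (v : Q.V) : PathAlg k Q :=
  PathAlg.mk k Q (FreeAlgebra.ι k (PathGen.vertex v))

/-- The arrow `e` in the path algebra. -/
noncomputable def PathAlg.arrow (e : Q.A) : PathAlg k Q :=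
  PathAlg.mk k Q (FreeAlgebra.ι k (PathGen.edge e))

theorem PathAlg.mk_rel {x y : FreeAlgebra k (PathGen Q)} (h : PathRel k Q x y) :
    PathAlg.mk k Q x = PathAlg.mk k Q y :=
  RingQuot.mkAlgHom_rel k h

theorem PathAlg.p_mul_self (v : Q.V) : PathAlg.p k Q v * PathAlg.p k Q v = PathAlg.p k Q v := by
  have h := PathAlg.mk_rel k Q (PathRel.vertex_mul_self v)
  simpa [map_mul, PathAlg.p] using h

theorem PathAlg.p_mul_ne (v w : Q.V) (hvw : v ≠ w) :
    PathAlg.p k Q v * PathAlg.p k Q w = 0 := by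
  have h := PathAlg.mk_rel k Q (PathRel.vertex_mul_ne v w hvw)
  simpa [map_mul, PathAlg.p] using h

theorem PathAlg.sum_p : (∑ v : Q.V, PathAlg.p k Q v) = 1 := by
  have h := PathAlg.mk_rel k Q (PathRel.sum_vertex)
  simpa [map_sum, PathAlg.p] using h

theorem PathAlg.arrow_mul_tgt (e : Q.A) :
    PathAlg.arrow k Q e * PathAlg.p k Q (Q.tgt e) = PathAlg.arrow k Q e := by
  have h := PathAlg.mk_rel k Q (PathRel.mul_tgt e)
  simpa [map_mul, PathAlg.p, PathAlg.arrow] using h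

theorem PathAlg.src_mul_arrow (e : Q.A) :
    PathAlg.p k Q (Q.src e) * PathAlg.arrow k Q e = PathAlg.arrow k Q e := by
  have h := PathAlg.mk_rel k Q (PathRel.src_mul e)
  simpa [map_mul, PathAlg.p, PathAlg.arrow] using h

/-- The set of vertices `{p v | v ∈ Q.V}` of the path algebra, as a finite set. -/
noncomputable def vertexFinset : Finset (PathAlg k Q) :=
  letI := Classical.decEq (PathAlg k Q)
  Finset.univ.image (PathAlg.p k Q)

end LPA

namespace LPA

variable (k : Type) [CommRing k] (Q : FinQuiver)

/-- The image in the path algebra of a word in the generators. -/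
noncomputable def pathOfWord (w : FreeMonoid (PathGen Q)) : PathAlg k Q :=
  PathAlg.mk k Q (FreeMonoid.lift (FreeAlgebra.ι k) w)

/-- The number of edge-letters in a word in the generators. -/
def edgeCount (w : FreeMonoid (PathGen Q)) : ℕ :=
  (FreeMonoid.toList w).countP fun g =>
    match g with
    | PathGen.edge _ => true
    | PathGen.vertex _ => false

/-- The `k`-span of the images of all words with at most `n` edge-letters: the elements of
degree at most `n` in the path algebra. -/
noncomputable def wordSpan (n : ℕ) : Submodule k (PathAlg k Q) :=
  Submodule.span k (pathOfWord k Q '' {w | edgeCount Q w ≤ n})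

open Classical in
/-- The path-length degree function on the path algebra: `pdeg x` is the smallest `n` such
that `x` is a `k`-linear combination of paths of length at most `n` (i.e. the maximal length
of a path in the support of `x`), and `pdeg 0 = ⊥ = -∞`. -/
noncomputable def pdeg (x : PathAlg k Q) : WithBot ℕ :=
  if x = 0 then ⊥ else ↑(sInf {n : ℕ | x ∈ wordSpan k Q n})

end LPA

/-!
The left transduction by an arrow `e` deletes a leading `e` from paths and kills all other paths.
It obeys the product rule `(x * y)_e = x_e * y + ε(x) • y_e`, where `ε` reads off the coefficient of
the trivial path at the source of `e`, and it acts coefficientwise on a free module, lowering the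
formal degree. Take a combination `∑ r_j m_j` of formal degree `D` and smaller degree, and let `i`
be the last index at which `D` is attained. Some transduction lowers the degree of `r_i` by exactly
one, and it turns the combination into one of formal degree `D - 1` with the same leading index: the
error terms `ε(r_j) • (m_j)_e` are too small to matter, because the degrees of the `m_j` increase.
Repeating this until `r_i` has degree `0`, it is a nonzero scalar multiple of a vertex; dividing by
the scalar exhibits `m_i` as dependent on the earlier `m_j`, since the terms after `i` have degree
below `D`.
-/

namespace LPA

section Filtration

variable {R M B : Type} [Ring R] [AddCommGroup M] [Module R M]
  {ν : R → WithBot ℕ} {μ : M → WithBot ℕ}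

namespace IsModuleFiltration

theorem neg_le (h : IsModuleFiltration ν μ) (m : M) : μ (-m) ≤ μ m := by
  simpa [h.map_zero] using h.sub_le 0 m

theorem add_le (h : IsModuleFiltration ν μ) (m n : M) : μ (m + n) ≤ max (μ m) (μ n) := by
  simpa using (h.sub_le m (-n)).trans (max_le_max le_rfl (h.neg_le n))

theorem sum_lt (h : IsModuleFiltration ν μ) {ι : Type*} {s : Finset ι} {f : ι → M} {D : ℕ}
    (hf : ∀ i ∈ s, μ (f i) < D) : μ (∑ i ∈ s, f i) < D :=
  Finset.sum_induction f (fun m => μ m < D)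
    (fun m n hm hn => (h.add_le m n).trans_lt (max_lt hm hn))
    (by simp [h.map_zero]) hf

end IsModuleFiltration

/-- The formal degree `max_b (ν (m_b) + μ₀ b)` of an element `m = ∑ m_b b` of the free module
`B →₀ R`, where the basis element `b` is given the degree `μ₀ b`. -/
noncomputable def formalDegree (ν : R → WithBot ℕ) (μ₀ : B → ℕ) (m : B →₀ R) : WithBot ℕ :=
  m.support.sup fun b => ν (m b) + (μ₀ b : WithBot ℕ)

theorem le_formalDegree (hν : ν 0 = ⊥) (μ₀ : B → ℕ) (m : B →₀ R) (b : B) :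
    ν (m b) + (μ₀ b : WithBot ℕ) ≤ formalDegree ν μ₀ m := by
  by_cases hb : m b = 0
  · simp [hb, hν]
  · exact Finset.le_sup (f := fun b => ν (m b) + (μ₀ b : WithBot ℕ)) (by simpa using hb)

theorem exists_formalDegree_eq (ν : R → WithBot ℕ) (μ₀ : B → ℕ) {m : B →₀ R} (hm : m ≠ 0) :
    ∃ b, m b ≠ 0 ∧ formalDegree ν μ₀ m = ν (m b) + (μ₀ b : WithBot ℕ) := by
  obtain ⟨b, hb, hdeg⟩ := Finset.exists_mem_eq_sup m.support (Finsupp.support_nonempty_iff.2 hm)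
    fun b => ν (m b) + (μ₀ b : WithBot ℕ)
  exact ⟨b, by simpa using hb, hdeg⟩

theorem isModuleFiltration_formalDegree (hν : IsModuleFiltration ν ν) (μ₀ : B → ℕ) :
    IsModuleFiltration ν (formalDegree ν μ₀) where
  map_zero := by simp [formalDegree]
  nonneg m hm := by
    obtain ⟨b, hb, hdeg⟩ := exists_formalDegree_eq ν μ₀ hm
    exact hdeg ▸ add_nonneg (hν.nonneg _ hb) (Nat.cast_nonneg _)
  sub_le m n := by
    refine Finset.sup_le fun b _ => ?_
    calc ν (m b - n b) + μ₀ b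
      _ ≤ max (ν (m b)) (ν (n b)) + μ₀ b := by gcongr; exact hν.sub_le _ _
      _ = max (ν (m b) + μ₀ b) (ν (n b) + μ₀ b) := max_add_add_right _ _ _ |>.symm
      _ ≤ max (formalDegree ν μ₀ m) (formalDegree ν μ₀ n) :=
        max_le_max (le_formalDegree hν.map_zero μ₀ m b) (le_formalDegree hν.map_zero μ₀ n b)
  smul_le r m := by
    refine Finset.sup_le fun b _ => ?_
    calc ν (r * m b) + μ₀ b
      _ ≤ ν r + ν (m b) + μ₀ b := by gcongr; exact hν.smul_le r (m b)
      _ = ν r + (ν (m b) + μ₀ b) := add_assoc _ _ _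
      _ ≤ ν r + formalDegree ν μ₀ m := by gcongr; exact le_formalDegree hν.map_zero μ₀ m b

theorem formalDegree_mapRange_add_one_le (hν : ν 0 = ⊥) (μ₀ : B → ℕ) {f : R → R} (hf₀ : f 0 = 0)
    (hf : ∀ r, ν (f r) + 1 ≤ ν r) (m : B →₀ R) :
    formalDegree ν μ₀ (m.mapRange f hf₀) + 1 ≤ formalDegree ν μ₀ m := by
  by_cases hm : m.mapRange f hf₀ = 0
  · simp [hm, formalDegree]
  · obtain ⟨b, -, hdeg⟩ := exists_formalDegree_eq ν μ₀ hm
    calc formalDegree ν μ₀ (m.mapRange f hf₀) + 1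
      _ = ν (f (m b)) + 1 + μ₀ b := by rw [hdeg, Finsupp.mapRange_apply, add_right_comm]
      _ ≤ ν (m b) + μ₀ b := by gcongr; exact hf (m b)
      _ ≤ formalDegree ν μ₀ m := le_formalDegree hν μ₀ m b

end Filtration

section LeadingRelation

variable {R M : Type} [Ring R] [AddCommGroup M] [Module R M]
  {ν : R → WithBot ℕ} {μ : M → WithBot ℕ} {ℓ : ℕ} {n : Fin ℓ → R} {m : Fin ℓ → M}
  {r : Fin ℓ → R} {i : Fin ℓ} {D : ℕ}

/-- The coefficients `r` witness the `P`-`μ`-dependence of the family `m`: the combination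
`∑ r_j m_j` has formal degree `D` but smaller degree, and `i` is the last index at which the formal
degree is attained. -/
structure IsLeadingRelation (ν : R → WithBot ℕ) (μ : M → WithBot ℕ) (n : Fin ℓ → R)
    (m : Fin ℓ → M) (r : Fin ℓ → R) (i : Fin ℓ) (D : ℕ) : Prop where
  mul_vertex : ∀ j, r j * n j = r j
  degree_sum_lt : μ (∑ j, r j • m j) < D
  degree_eq : ν (r i) + μ (m i) = D
  degree_le : ∀ j, ν (r j) + μ (m j) ≤ D
  degree_lt : ∀ j, i < j → ν (r j) + μ (m j) < D

theorem exists_isLeadingRelation {r : Fin ℓ →₀ R} (hr : ∀ j, r j * n j = r j)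
    (hlt : μ (r.sum fun j a => a • m j) < r.support.sup fun j => ν (r j) + μ (m j)) :
    ∃ i D, IsLeadingRelation ν μ n m r i D := by
  let δ (j : Fin ℓ) : WithBot ℕ := ν (r j) + μ (m j)
  obtain ⟨j₀, -⟩ : r.support.Nonempty := by
    by_contra hempty
    simp [Finset.not_nonempty_iff_eq_empty.1 hempty] at hlt
  obtain ⟨i, -, hi⟩ := Finset.exists_max_image Finset.univ (fun j => toLex (δ j, j))
    ⟨j₀, Finset.mem_univ j₀⟩
  have hmax (j) : δ j < δ i ∨ δ j = δ i ∧ j ≤ i :=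
    Prod.Lex.toLex_le_toLex.1 (hi j (Finset.mem_univ j))
  have hle (j) : δ j ≤ δ i := (hmax j).elim le_of_lt fun h => h.1.le
  have hsum : μ (∑ j, r j • m j) < δ i := by
    rw [Finsupp.sum_fintype _ _ (by simp)] at hlt
    exact hlt.trans_le (Finset.sup_le fun j _ => hle j)
  obtain ⟨D, hD⟩ := WithBot.ne_bot_iff_exists.1 (bot_le.trans_lt hsum).ne'
  refine ⟨i, D, hr, hsum.trans_eq hD.symm, hD.symm, fun j => (hle j).trans_eq hD.symm,
    fun j hij => ?_⟩
  exact ((hmax j).resolve_right fun h => h.2.not_gt hij).trans_eq hD.symm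

theorem sum_eq_sum_lt_add_add_sum_Ioi {ι A : Type*} [Fintype ι] [LinearOrder ι]
    [LocallyFiniteOrderTop ι] [AddCommMonoid A] (f : ι → A) (i : ι) :
    ∑ j, f j = ∑ j : {j // j < i}, f j + (f i + ∑ j ∈ Finset.Ioi i, f j) := by
  rw [← Fintype.sum_subtype_add_sum_subtype (· < i) f, Finset.add_sum_Ioi_eq_sum_Ici,
    Finset.sum_subtype (Finset.Ici i) (p := fun j => ¬ j < i) (by simp)]

theorem IsLeadingRelation.depOn (hν : IsModuleFiltration ν ν) (hμ : IsModuleFiltration ν μ)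
    (h : IsLeadingRelation ν μ n m r i D) (hi : r i • m i = m i) (hD : μ (m i) = D) :
    DepOn ν μ (fun j : {j // j < i} => n j.1) (fun j : {j // j < i} => m j.1) (m i) := by
  refine Or.inr ⟨Finsupp.equivFunOnFinite.symm fun j => -r j.1, fun j => ?_, ?_, fun j => ?_⟩
  · simp [h.mul_vertex]
  · have hsub : m i - ∑ j : {j // j < i}, -r j.1 • m j.1 =
        ∑ j, r j • m j - ∑ j ∈ Finset.Ioi i, r j • m j := by
      rw [sum_eq_sum_lt_add_add_sum_Ioi (fun j => r j • m j) i, hi]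
      simp only [neg_smul, Finset.sum_neg_distrib]
      abel
    rw [Finsupp.sum_fintype _ _ (by simp), hD]
    simp only [Finsupp.equivFunOnFinite_symm_apply_apply, hsub]
    refine (hμ.sub_le _ _).trans_lt (max_lt h.degree_sum_lt (hμ.sum_lt fun j hj => ?_))
    exact (hμ.smul_le _ _).trans_lt (h.degree_lt j (Finset.mem_Ioi.1 hj))
  · rw [hD]
    exact (add_le_add_left (hν.neg_le _) _).trans (h.degree_le j.1)

end LeadingRelation

namespace PathAlg

variable {k : Type} [CommRing k] {Q : FinQuiver}

section UniversalProperty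

variable {S : Type*} [Semiring S] [Algebra k S]

/-- Images `p v` of the vertices and `a e` of the arrows of `Q` in a semiring that satisfy the
defining relations of the path algebra. -/
structure IsPathFamily (p : Q.V → S) (a : Q.A → S) : Prop where
  mul_self : ∀ v, p v * p v = p v
  mul_of_ne : ∀ v w, v ≠ w → p v * p w = 0
  sum_eq_one : ∑ v, p v = 1
  src_mul : ∀ e, p (Q.src e) * a e = a e
  mul_tgt : ∀ e, a e * p (Q.tgt e) = a e

theorem IsPathFamily.lift_eq_of_rel {p : Q.V → S} {a : Q.A → S} (h : IsPathFamily p a)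
    ⦃x y : FreeAlgebra k (PathGen Q)⦄ (hxy : PathRel k Q x y) :
    FreeAlgebra.lift k (PathGen.rec p a : PathGen Q → S) x =
      FreeAlgebra.lift k (PathGen.rec p a : PathGen Q → S) y := by
  cases hxy with
  | vertex_mul_self v => simpa using h.mul_self v
  | vertex_mul_ne v w hvw => simpa using h.mul_of_ne v w hvw
  | sum_vertex => simpa using h.sum_eq_one
  | src_mul e => simpa using h.src_mul e
  | mul_tgt e => simpa using h.mul_tgt e

/-- The homomorphism out of the path algebra given by its universal property. -/
noncomputable def lift (p : Q.V → S) (a : Q.A → S) (h : IsPathFamily p a) :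
    PathAlg k Q →ₐ[k] S :=
  RingQuot.liftAlgHom k
    ⟨FreeAlgebra.lift k (PathGen.rec p a : PathGen Q → S), h.lift_eq_of_rel⟩

variable {p : Q.V → S} {a : Q.A → S} (h : IsPathFamily p a)

@[simp]
theorem lift_p (v : Q.V) : lift p a h (PathAlg.p k Q v) = p v :=
  (RingQuot.liftAlgHom_mkAlgHom_apply k _ h.lift_eq_of_rel _).trans (by simp)

@[simp]
theorem lift_arrow (e : Q.A) : lift p a h (arrow k Q e) = a e :=
  (RingQuot.liftAlgHom_mkAlgHom_apply k _ h.lift_eq_of_rel _).trans (by simp)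

end UniversalProperty

theorem induction {motive : PathAlg k Q → Prop}
    (algebraMap : ∀ c, motive (algebraMap k (PathAlg k Q) c)) (p : ∀ v, motive (p k Q v))
    (arrow : ∀ e, motive (arrow k Q e)) (add : ∀ x y, motive x → motive y → motive (x + y))
    (mul : ∀ x y, motive x → motive y → motive (x * y)) (x : PathAlg k Q) : motive x := by
  obtain ⟨y, rfl⟩ : ∃ y, mk k Q y = x := RingQuot.mkAlgHom_surjective k _ x
  induction y using FreeAlgebra.induction with
  | grade0 c => exact ((mk k Q).commutes c).symm ▸ algebraMap c
  | grade1 g =>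
    cases g with
    | vertex v => exact p v
    | edge e => exact arrow e
  | mul y z hy hz => exact map_mul (mk k Q) y z ▸ mul _ _ hy hz
  | add y z hy hz => exact map_add (mk k Q) y z ▸ add _ _ hy hz

section Transduction

theorem isPathFamily_augmentation (v : Q.V) :
    IsPathFamily (fun w => if w = v then (1 : k) else 0) (0 : Q.A → k) where
  mul_self w := by simp +contextual
  mul_of_ne u w huw := by grind
  sum_eq_one := by simp
  src_mul e := by simp
  mul_tgt e := by simp

/-- The character of the path algebra that reads off the coefficient of the trivial path at `v`. -/
noncomputable def augmentation (v : Q.V) : PathAlg k Q →ₐ[k] k :=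
  lift _ _ (isPathFamily_augmentation v)

@[simp]
theorem augmentation_p (v w : Q.V) : augmentation v (p k Q w) = if w = v then 1 else 0 :=
  lift_p _ w

@[simp]
theorem augmentation_arrow (v : Q.V) (e : Q.A) : augmentation v (arrow k Q e) = 0 :=
  lift_arrow _ e

theorem isPathFamily_transduction (e : Q.A) :
    IsPathFamily (fun v => !![if v = Q.src e then 1 else 0, 0; 0, p k Q v])
      (fun f => !![0, if f = e then p k Q (Q.tgt e) else 0; 0, arrow k Q f]) where
  mul_self v := by
    ext i j
    fin_cases i <;> fin_cases j <;> simp +contextual [Matrix.mul_apply, p_mul_self]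
  mul_of_ne v w hvw := by
    have hsrc : w = Q.src e → v ≠ Q.src e := by grind
    ext i j
    fin_cases i <;> fin_cases j <;> simp +contextual [Matrix.mul_apply, p_mul_ne k Q v w hvw, hsrc]
  sum_eq_one := by
    ext i j
    fin_cases i <;> fin_cases j <;> simp [Matrix.sum_apply, sum_p]
  src_mul f := by
    ext i j
    by_cases hfe : f = e <;> fin_cases i <;> fin_cases j <;>
      simp [Matrix.mul_apply, hfe, src_mul_arrow]
  mul_tgt f := by
    ext i j
    by_cases hfe : f = e <;> fin_cases i <;> fin_cases j <;>
      simp [Matrix.mul_apply, hfe, arrow_mul_tgt, p_mul_self]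

/-- The representation of the path algebra by the upper triangular matrices
`!![augmentation (src e) x, transduction e x; 0, x]`, which packages the product rule of the
transduction by `e` as multiplicativity. -/
noncomputable def transductionHom (e : Q.A) :
    PathAlg k Q →ₐ[k] Matrix (Fin 2) (Fin 2) (PathAlg k Q) :=
  lift _ _ (isPathFamily_transduction e)

/-- The left transduction by the arrow `e`: it sends a path `e q` to `q`, and every path that does
not start with `e` to `0`. -/
noncomputable def transduction (e : Q.A) : PathAlg k Q →ₗ[k] PathAlg k Q :=
  Matrix.entryLinearMap k _ 0 1 ∘ₗ (transductionHom e).toLinearMap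

theorem transductionHom_apply (e : Q.A) (x : PathAlg k Q) :
    transductionHom e x =
      !![algebraMap k _ (augmentation (Q.src e) x), transduction e x; 0, x] := by
  suffices h : transductionHom e x 0 0 = algebraMap k _ (augmentation (Q.src e) x) ∧
      transductionHom e x 1 0 = 0 ∧ transductionHom e x 1 1 = x by
    ext i j
    fin_cases i <;> fin_cases j
    exacts [h.1, rfl, h.2.1, h.2.2]
  induction x using PathAlg.induction with
  | algebraMap c => simp [Matrix.algebraMap_matrix_apply]
  | p v => simp +contextual [transductionHom, apply_ite]
  | arrow f => simp [transductionHom]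
  | add x y hx hy => simp [hx, hy]
  | mul x y hx hy => simp [Matrix.mul_apply, hx, hy]

@[simp]
theorem transduction_p (e : Q.A) (v : Q.V) : transduction e (p k Q v) = 0 := by
  simp [transduction, transductionHom]

@[simp]
theorem transduction_arrow (e f : Q.A) :
    transduction e (arrow k Q f) = if f = e then p k Q (Q.tgt e) else 0 := by
  simp [transduction, transductionHom]

theorem transduction_mul (e : Q.A) (x y : PathAlg k Q) :
    transduction e (x * y) =
      transduction e x * y + augmentation (Q.src e) x • transduction e y := by
  have h := congrArg (· 0 1) (map_mul (transductionHom e) x y)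
  simpa [transductionHom_apply, Matrix.mul_apply, Algebra.smul_def, add_comm] using h

@[simp]
theorem transduction_one (e : Q.A) : transduction e (1 : PathAlg k Q) = 0 := by
  simp [← sum_p]

theorem transduction_mul_p {e : Q.A} {v : Q.V} {x : PathAlg k Q} (hx : x * p k Q v = x) :
    transduction e x * p k Q v = transduction e x := by
  simpa [hx] using (transduction_mul e x (p k Q v)).symm

theorem sum_smul_p_mul_p (c : Q.V → k) (w : Q.V) :
    (∑ v, c v • p k Q v) * p k Q w = c w • p k Q w := by
  rw [Finset.sum_mul, Finset.sum_eq_single w]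
  · rw [smul_mul_assoc, p_mul_self]
  · intro v _ hvw
    rw [smul_mul_assoc, p_mul_ne k Q v w hvw, smul_zero]
  · simp

theorem sum_smul_p_mul_arrow (c : Q.V → k) (e : Q.A) :
    (∑ v, c v • p k Q v) * arrow k Q e = c (Q.src e) • arrow k Q e := by
  rw [← src_mul_arrow, ← mul_assoc, sum_smul_p_mul_p, smul_mul_assoc]

theorem eq_sum_p_add_sum_arrow_mul_transduction (x : PathAlg k Q) :
    x = ∑ v, augmentation v x • p k Q v + ∑ e, arrow k Q e * transduction e x := by
  induction x using PathAlg.induction with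
  | algebraMap c =>
    simp [Algebra.algebraMap_eq_smul_one, ← Finset.smul_sum, sum_p]
  | p v => simp
  | arrow f => simp [arrow_mul_tgt]
  | add x y hx hy =>
    conv_lhs => rw [hx, hy]
    simp only [map_add, add_smul, mul_add, Finset.sum_add_distrib]
    abel
  | mul x y hx hy =>
    have hvertices : (∑ v, augmentation v x • p k Q v) * y =
        ∑ v, augmentation v (x * y) • p k Q v +
          ∑ e, arrow k Q e * augmentation (Q.src e) x • transduction e y := by
      conv_lhs => rw [hy]
      rw [mul_add]
      simp only [Finset.mul_sum, mul_smul_comm, ← mul_assoc, sum_smul_p_mul_p,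
        sum_smul_p_mul_arrow, map_mul, smul_mul_assoc, smul_smul, mul_comm]
    conv_lhs => rw [hx, add_mul, hvertices]
    simp only [transduction_mul, mul_add, Finset.sum_add_distrib, Finset.sum_mul, mul_assoc]
    abel

end Transduction

end PathAlg

section Degree

open PathAlg

variable {k : Type} [CommRing k] {Q : FinQuiver}

@[simp]
theorem pathOfWord_one : pathOfWord k Q 1 = 1 := by
  simp [pathOfWord]

@[simp]
theorem pathOfWord_mul (w w' : FreeMonoid (PathGen Q)) :
    pathOfWord k Q (w * w') = pathOfWord k Q w * pathOfWord k Q w' := by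
  simp [pathOfWord]

@[simp]
theorem pathOfWord_vertex (v : Q.V) :
    pathOfWord k Q (FreeMonoid.of (.vertex v)) = PathAlg.p k Q v := by
  simp [pathOfWord, PathAlg.p]

@[simp]
theorem pathOfWord_edge (e : Q.A) :
    pathOfWord k Q (FreeMonoid.of (.edge e)) = PathAlg.arrow k Q e := by
  simp [pathOfWord, PathAlg.arrow]

@[simp]
theorem edgeCount_one : edgeCount Q 1 = 0 := by
  simp [edgeCount]

@[simp]
theorem edgeCount_mul (w w' : FreeMonoid (PathGen Q)) :
    edgeCount Q (w * w') = edgeCount Q w + edgeCount Q w' := by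
  simp [edgeCount]

@[simp]
theorem edgeCount_vertex (v : Q.V) : edgeCount Q (FreeMonoid.of (.vertex v)) = 0 := by
  simp [edgeCount]

@[simp]
theorem edgeCount_edge (e : Q.A) : edgeCount Q (FreeMonoid.of (.edge e)) = 1 := by
  simp [edgeCount]

variable (k) in
theorem pathOfWord_mem_wordSpan {w : FreeMonoid (PathGen Q)} {n : ℕ}
    (hw : edgeCount Q w ≤ n) : pathOfWord k Q w ∈ wordSpan k Q n :=
  Submodule.subset_span ⟨w, hw, rfl⟩

theorem wordSpan_mono : Monotone (wordSpan k Q) := fun _ _ h =>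
  Submodule.span_mono (Set.image_mono fun _ hw => le_trans hw h)

theorem mul_mem_wordSpan {m n : ℕ} {x y : PathAlg k Q} (hx : x ∈ wordSpan k Q m)
    (hy : y ∈ wordSpan k Q n) : x * y ∈ wordSpan k Q (m + n) := by
  suffices h : wordSpan k Q m * wordSpan k Q n ≤ wordSpan k Q (m + n) from
    h (Submodule.mul_mem_mul hx hy)
  rw [wordSpan, wordSpan, Submodule.span_mul_span, Submodule.span_le]
  rintro _ ⟨_, ⟨w, hw, rfl⟩, _, ⟨w', hw', rfl⟩, rfl⟩
  change pathOfWord k Q w * pathOfWord k Q w' ∈ wordSpan k Q (m + n)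
  rw [← pathOfWord_mul]
  exact pathOfWord_mem_wordSpan k ((edgeCount_mul w w').trans_le (add_le_add hw hw'))

theorem p_mem_wordSpan (v : Q.V) : PathAlg.p k Q v ∈ wordSpan k Q 0 :=
  pathOfWord_vertex (k := k) v ▸ pathOfWord_mem_wordSpan k (edgeCount_vertex v).le

theorem arrow_mem_wordSpan (e : Q.A) : PathAlg.arrow k Q e ∈ wordSpan k Q 1 :=
  pathOfWord_edge (k := k) e ▸ pathOfWord_mem_wordSpan k (edgeCount_edge e).le

theorem algebraMap_mem_wordSpan (c : k) : algebraMap k (PathAlg k Q) c ∈ wordSpan k Q 0 := by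
  rw [Algebra.algebraMap_eq_smul_one, ← pathOfWord_one]
  exact Submodule.smul_mem _ c (pathOfWord_mem_wordSpan k edgeCount_one.le)

theorem exists_mem_wordSpan (x : PathAlg k Q) : ∃ n, x ∈ wordSpan k Q n := by
  induction x using PathAlg.induction with
  | algebraMap c => exact ⟨0, algebraMap_mem_wordSpan c⟩
  | p v => exact ⟨0, p_mem_wordSpan v⟩
  | arrow e => exact ⟨1, arrow_mem_wordSpan e⟩
  | add x y hx hy =>
    obtain ⟨m, hm⟩ := hx
    obtain ⟨n, hn⟩ := hy
    exact ⟨max m n, add_mem (wordSpan_mono (le_max_left m n) hm)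
      (wordSpan_mono (le_max_right m n) hn)⟩
  | mul x y hx hy =>
    obtain ⟨m, hm⟩ := hx
    obtain ⟨n, hn⟩ := hy
    exact ⟨m + n, mul_mem_wordSpan hm hn⟩

theorem pdeg_le_natCast_iff {x : PathAlg k Q} {n : ℕ} :
    pdeg k Q x ≤ n ↔ x ∈ wordSpan k Q n := by
  unfold pdeg
  split_ifs with hx
  · simp [hx]
  · rw [Nat.cast_le]
    exact ⟨fun h => wordSpan_mono h (Nat.sInf_mem (exists_mem_wordSpan x)), fun h => Nat.sInf_le h⟩

theorem pdeg_eq_bot_iff {x : PathAlg k Q} : pdeg k Q x = ⊥ ↔ x = 0 := by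
  unfold pdeg
  split_ifs with hx <;> simp [hx]

theorem isModuleFiltration_pdeg : IsModuleFiltration (pdeg k Q) (pdeg k Q) where
  map_zero := if_pos rfl
  nonneg x hx := by
    rw [pdeg, if_neg hx]
    exact Nat.cast_nonneg _
  sub_le x y := by
    cases hn : max (pdeg k Q x) (pdeg k Q y) with
    | bot =>
      have hx : x = 0 := pdeg_eq_bot_iff.1 (max_eq_bot.1 hn).1
      have hy : y = 0 := pdeg_eq_bot_iff.1 (max_eq_bot.1 hn).2
      simp [hx, hy, pdeg]
    | coe n =>
      refine pdeg_le_natCast_iff.2 (sub_mem ?_ ?_)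
      · exact pdeg_le_natCast_iff.1 ((le_max_left _ _).trans_eq hn)
      · exact pdeg_le_natCast_iff.1 ((le_max_right _ _).trans_eq hn)
  smul_le x y := by
    rw [smul_eq_mul]
    cases hx : pdeg k Q x with
    | bot => simp [pdeg_eq_bot_iff.1 hx, pdeg]
    | coe m =>
      cases hy : pdeg k Q y with
      | bot => simp [pdeg_eq_bot_iff.1 hy, pdeg]
      | coe n =>
        exact pdeg_le_natCast_iff.2
          (mul_mem_wordSpan (pdeg_le_natCast_iff.1 hx.le) (pdeg_le_natCast_iff.1 hy.le))

theorem pdeg_algebraMap_le (c : k) : pdeg k Q (algebraMap k _ c) ≤ 0 :=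
  Nat.cast_zero (R := WithBot ℕ) ▸ pdeg_le_natCast_iff.2 (algebraMap_mem_wordSpan c)

theorem IsModuleFiltration.degree_smul_le {M : Type} [AddCommGroup M] [Module k M]
    [Module (PathAlg k Q) M] [IsScalarTower k (PathAlg k Q) M] {μ : M → WithBot ℕ}
    (h : IsModuleFiltration (pdeg k Q) μ) (c : k) (x : M) : μ (c • x) ≤ μ x :=
  calc μ (c • x)
    _ = μ (algebraMap k (PathAlg k Q) c • x) := by rw [algebraMap_smul]
    _ ≤ pdeg k Q (algebraMap k _ c) + μ x := h.smul_le _ _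
    _ ≤ μ x := add_le_of_nonpos_left (pdeg_algebraMap_le c)

theorem pdeg_smul_le (c : k) (x : PathAlg k Q) : pdeg k Q (c • x) ≤ pdeg k Q x :=
  isModuleFiltration_pdeg.degree_smul_le c x

theorem pdeg_transduction_pathOfWord_add_one_le (e : Q.A) (w : FreeMonoid (PathGen Q)) :
    pdeg k Q (transduction e (pathOfWord k Q w)) + 1 ≤ edgeCount Q w := by
  induction w using FreeMonoid.inductionOn' with
  | one => simp [pdeg]
  | of_mul g w ih =>
    rw [pathOfWord_mul, edgeCount_mul, transduction_mul]
    cases g with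
    | vertex v =>
      rw [pathOfWord_vertex, edgeCount_vertex, transduction_p, zero_mul, zero_add, zero_add]
      exact (add_le_add_left (pdeg_smul_le _ _) 1).trans ih
    | edge f =>
      rw [pathOfWord_edge, edgeCount_edge, transduction_arrow, augmentation_arrow, zero_smul,
        add_zero, add_comm 1, Nat.cast_add, Nat.cast_one]
      gcongr
      refine pdeg_le_natCast_iff.2 ?_
      split_ifs
      · exact zero_add (edgeCount Q w) ▸
          mul_mem_wordSpan (p_mem_wordSpan _) (pathOfWord_mem_wordSpan k le_rfl)
      · simp

theorem pdeg_transduction_add_one_le (e : Q.A) (x : PathAlg k Q) :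
    pdeg k Q (transduction e x) + 1 ≤ pdeg k Q x := by
  cases hx : pdeg k Q x with
  | bot => simp [pdeg_eq_bot_iff.1 hx, pdeg]
  | coe n =>
    have hmem : x ∈ wordSpan k Q n := pdeg_le_natCast_iff.1 hx.le
    clear hx
    induction hmem using Submodule.span_induction with
    | mem x hx =>
      obtain ⟨w, hw, rfl⟩ := hx
      exact (pdeg_transduction_pathOfWord_add_one_le e w).trans (Nat.cast_le.2 hw)
    | zero => simp [pdeg]
    | add x y _ _ hx hy =>
      rw [map_add]
      calc pdeg k Q (transduction e x + transduction e y) + 1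
        _ ≤ max (pdeg k Q (transduction e x)) (pdeg k Q (transduction e y)) + 1 := by
          gcongr
          exact isModuleFiltration_pdeg.add_le _ _
        _ ≤ n := max_add_add_right _ _ (1 : WithBot ℕ) ▸ max_le hx hy
    | smul c x _ hx =>
      rw [map_smul]
      exact (add_le_add_left (pdeg_smul_le _ _) 1).trans hx

theorem pdeg_le_of_forall_transduction {x : PathAlg k Q} {n : ℕ}
    (h : ∀ e, pdeg k Q (transduction e x) + 1 ≤ n) : pdeg k Q x ≤ n := by
  rw [eq_sum_p_add_sum_arrow_mul_transduction x, pdeg_le_natCast_iff]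
  refine add_mem (sum_mem fun v _ => ?_) (sum_mem fun e _ => ?_)
  · exact Submodule.smul_mem _ _ (wordSpan_mono n.zero_le (p_mem_wordSpan v))
  · rw [← pdeg_le_natCast_iff]
    calc pdeg k Q (arrow k Q e * transduction e x)
      _ ≤ pdeg k Q (arrow k Q e) + pdeg k Q (transduction e x) :=
        isModuleFiltration_pdeg.smul_le _ _
      _ ≤ (1 : ℕ) + pdeg k Q (transduction e x) := by
        gcongr
        exact pdeg_le_natCast_iff.2 (arrow_mem_wordSpan e)
      _ ≤ n := by rw [add_comm]; exact h e

theorem exists_pdeg_transduction_eq {x : PathAlg k Q} {n : ℕ} (hx : pdeg k Q x = (n + 1 : ℕ)) :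
    ∃ e, pdeg k Q (transduction e x) = n := by
  by_contra! hne
  have hle (e) : pdeg k Q (transduction e x) ≤ n :=
    (WithBot.add_le_add_iff_right WithBot.one_ne_bot).1
      ((pdeg_transduction_add_one_le e x).trans_eq hx)
  have hxn : pdeg k Q x ≤ n := pdeg_le_of_forall_transduction fun e =>
    Nat.WithBot.add_one_le_of_lt ((hle e).lt_of_ne (hne e))
  exact absurd (Nat.cast_le.1 (hx ▸ hxn)) n.not_succ_le_self

theorem eq_augmentation_smul_p {x : PathAlg k Q} {v : Q.V} (hx : pdeg k Q x = 0)
    (hv : x * p k Q v = x) : x = augmentation v x • p k Q v := by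
  have htrans (e) : transduction e x = 0 := by
    have h : pdeg k Q (transduction e x) + 1 < 0 + 1 :=
      ((pdeg_transduction_add_one_le e x).trans_eq hx).trans_lt (by simp)
    exact pdeg_eq_bot_iff.1 (Nat.WithBot.lt_zero_iff.1 (lt_of_add_lt_add_right h))
  have hsum : x = ∑ w, augmentation w x • p k Q w := by
    simpa [htrans] using eq_sum_p_add_sum_arrow_mul_transduction x
  conv_lhs => rw [← hv, hsum, sum_smul_p_mul_p]

end Degree

section Transduction

open PathAlg

variable {k : Type} [CommRing k] {Q : FinQuiver} {M B : Type} [AddCommGroup M] [Module k M]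
  [Module (PathAlg k Q) M] {μ : M → WithBot ℕ} {ℓ : ℕ}
  {v : Fin ℓ → Q.V} {m : Fin ℓ → M} {r : Fin ℓ → PathAlg k Q} {i : Fin ℓ} {D : ℕ}

/-- A `k`-linear map `T` on a filtered module over the path algebra that lowers degrees and follows
the product rule of the left transduction by the arrow `e`. -/
structure IsTransduction (μ : M → WithBot ℕ) (e : Q.A) (T : M →ₗ[k] M) : Prop where
  map_smul : ∀ (r : PathAlg k Q) (x : M),
    T (r • x) = transduction e r • x + augmentation (Q.src e) r • T x
  degree_add_one_le : ∀ x, μ (T x) + 1 ≤ μ x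

theorem isTransduction_mapRange (μ₀ : B → ℕ) (e : Q.A) :
    IsTransduction (formalDegree (pdeg k Q) μ₀) e
      (Finsupp.mapRange.linearMap (transduction e)) where
  map_smul r x := by
    ext b
    simp [transduction_mul]
  degree_add_one_le x :=
    formalDegree_mapRange_add_one_le isModuleFiltration_pdeg.map_zero μ₀ (map_zero _)
      (pdeg_transduction_add_one_le e) x

theorem IsTransduction.degree_apply_lt {e : Q.A} {T : M →ₗ[k] M} (hT : IsTransduction μ e T)
    {x : M} (hx : μ x < (D + 1 : ℕ)) : μ (T x) < D :=
  lt_of_add_lt_add_right ((hT.degree_add_one_le x).trans_lt hx)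

variable [IsScalarTower k (PathAlg k Q) M]

theorem IsTransduction.degree_sum_transduction_smul_lt {e : Q.A} {T : M →ₗ[k] M}
    (hT : IsTransduction μ e T) (hμ : IsModuleFiltration (pdeg k Q) μ)
    (hsum : μ (∑ j, r j • m j) < (D + 1 : ℕ)) (hm : ∀ j, r j ≠ 0 → μ (m j) < (D + 1 : ℕ)) :
    μ (∑ j, transduction e (r j) • m j) < D := by
  have hprod : ∑ j, transduction e (r j) • m j =
      T (∑ j, r j • m j) - ∑ j, augmentation (Q.src e) (r j) • T (m j) := by
    simp [hT.map_smul, Finset.sum_add_distrib]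
  rw [hprod]
  refine (hμ.sub_le _ _).trans_lt
    (max_lt (hT.degree_apply_lt hsum) (hμ.sum_lt fun j _ => ?_))
  by_cases hj : r j = 0
  · simp [hj, hμ.map_zero]
  · exact (hμ.degree_smul_le _ _).trans_lt (hT.degree_apply_lt (hm j hj))

theorem IsLeadingRelation.map_transduction {e : Q.A} {T : M →ₗ[k] M} {s : ℕ}
    (hμ : IsModuleFiltration (pdeg k Q) μ) (hT : IsTransduction μ e T)
    (hmono : ∀ j ≤ i, μ (m j) ≤ μ (m i))
    (h : IsLeadingRelation (pdeg k Q) μ (fun j => p k Q (v j)) m r i (D + 1))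
    (hs : pdeg k Q (r i) = (s + 1 : ℕ)) (hes : pdeg k Q (transduction e (r i)) = s) :
    IsLeadingRelation (pdeg k Q) μ (fun j => p k Q (v j)) m
      (fun j => transduction e (r j)) i D := by
  have hdrop (j) : pdeg k Q (transduction e (r j)) + μ (m j) + 1 ≤ pdeg k Q (r j) + μ (m j) := by
    rw [add_right_comm]
    gcongr
    exact pdeg_transduction_add_one_le e (r j)
  have heq : s + μ (m i) = D := by
    refine WithBot.add_right_cancel WithBot.one_ne_bot ?_
    rw [add_right_comm]
    simpa [hs] using h.degree_eq
  have hmi : μ (m i) < (D + 1 : ℕ) :=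
    calc μ (m i)
      _ ≤ s + μ (m i) := le_add_of_nonneg_left (Nat.cast_nonneg s)
      _ < (D + 1 : ℕ) := heq ▸ Nat.cast_lt.2 D.lt_succ_self
  have hmj (j) (hj : r j ≠ 0) : μ (m j) < (D + 1 : ℕ) := by
    rcases le_or_gt j i with hji | hij
    · exact (hmono j hji).trans_lt hmi
    · exact (le_add_of_nonneg_left (isModuleFiltration_pdeg.nonneg _ hj)).trans_lt
        (h.degree_lt j hij)
  exact
    { mul_vertex := fun j => transduction_mul_p (h.mul_vertex j)
      degree_sum_lt := hT.degree_sum_transduction_smul_lt hμ h.degree_sum_lt hmj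
      degree_eq := hes ▸ heq
      degree_le := fun j =>
        (WithBot.add_le_add_iff_right WithBot.one_ne_bot).1 ((hdrop j).trans (h.degree_le j))
      degree_lt := fun j hij =>
        lt_of_add_lt_add_right ((hdrop j).trans_lt (h.degree_lt j hij)) }

theorem IsLeadingRelation.exists_pdeg_eq_zero
    (hμ : IsModuleFiltration (pdeg k Q) μ) (hT : ∀ e : Q.A, ∃ T : M →ₗ[k] M, IsTransduction μ e T)
    (hmono : ∀ j ≤ i, μ (m j) ≤ μ (m i))
    (h : IsLeadingRelation (pdeg k Q) μ (fun j => p k Q (v j)) m r i D) :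
    ∃ r' D', IsLeadingRelation (pdeg k Q) μ (fun j => p k Q (v j)) m r' i D' ∧
      pdeg k Q (r' i) = 0 := by
  obtain ⟨s, t, hs, -, hD⟩ := WithBot.add_eq_coe.1 h.degree_eq
  induction s generalizing r D with
  | zero => exact ⟨r, D, h, hs.symm⟩
  | succ s ih =>
    obtain ⟨e, he⟩ := exists_pdeg_transduction_eq hs.symm
    obtain ⟨T, hTe⟩ := hT e
    obtain rfl : s + t + 1 = D := by lia
    exact ih (h.map_transduction hμ hTe hmono hs.symm he) he.symm rfl

end Transduction

section WeakAlgorithm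

open PathAlg

variable {k : Type} [Field k] {Q : FinQuiver} {M : Type} [AddCommGroup M] [Module k M]
  [Module (PathAlg k Q) M] [IsScalarTower k (PathAlg k Q) M] {μ : M → WithBot ℕ}

theorem pdeg_smul {c : k} (hc : c ≠ 0) (x : PathAlg k Q) : pdeg k Q (c • x) = pdeg k Q x :=
  le_antisymm (pdeg_smul_le c x) (by simpa [smul_smul, hc] using pdeg_smul_le c⁻¹ (c • x))

theorem IsLeadingRelation.smul {ℓ : ℕ} {n : Fin ℓ → PathAlg k Q} {m : Fin ℓ → M}
    {r : Fin ℓ → PathAlg k Q} {i : Fin ℓ} {D : ℕ} (hμ : IsModuleFiltration (pdeg k Q) μ)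
    (h : IsLeadingRelation (pdeg k Q) μ n m r i D) {c : k} (hc : c ≠ 0) :
    IsLeadingRelation (pdeg k Q) μ n m (fun j => c • r j) i D where
  mul_vertex j := by rw [smul_mul_assoc, h.mul_vertex]
  degree_sum_lt := by
    simp only [smul_assoc, ← Finset.smul_sum]
    exact (hμ.degree_smul_le c _).trans_lt h.degree_sum_lt
  degree_eq := by rw [pdeg_smul hc, h.degree_eq]
  degree_le j := by rw [pdeg_smul hc]; exact h.degree_le j
  degree_lt j hij := by rw [pdeg_smul hc]; exact h.degree_lt j hij

theorem IsLeadingRelation.depOn_of_pdeg_eq_zero {ℓ : ℕ} {v : Fin ℓ → Q.V} {m : Fin ℓ → M}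
    {r : Fin ℓ → PathAlg k Q} {i : Fin ℓ} {D : ℕ} (hμ : IsModuleFiltration (pdeg k Q) μ)
    (h : IsLeadingRelation (pdeg k Q) μ (fun j => p k Q (v j)) m r i D)
    (hr : pdeg k Q (r i) = 0) (hi : p k Q (v i) • m i = m i) :
    DepOn (pdeg k Q) μ (fun j : {j // j < i} => p k Q (v j.1))
      (fun j : {j // j < i} => m j.1) (m i) := by
  have hri : r i = augmentation (v i) (r i) • p k Q (v i) :=
    eq_augmentation_smul_p hr (h.mul_vertex i)
  have hc : augmentation (v i) (r i) ≠ 0 := by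
    intro hc
    rw [hc, zero_smul] at hri
    simp [hri, pdeg] at hr
  refine (h.smul hμ (inv_ne_zero hc)).depOn isModuleFiltration_pdeg hμ ?_ ?_
  · calc ((augmentation (v i) (r i))⁻¹ • r i) • m i
      _ = p k Q (v i) • m i := by rw [(inv_smul_eq_iff₀ hc).2 hri]
      _ = m i := hi
  · simpa [hr] using h.degree_eq

theorem weakAlgorithm_of_forall_exists_isTransduction (hμ : IsModuleFiltration (pdeg k Q) μ)
    (hT : ∀ e : Q.A, ∃ T : M →ₗ[k] M, IsTransduction μ e T) :
    WeakAlgorithm (pdeg k Q) (vertexFinset k Q) μ := by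
  intro ℓ n m hn hm hmono hdep
  have hvertex (j) : ∃ v, p k Q v = n j := by simpa [vertexFinset] using hn j
  choose v hv using hvertex
  obtain rfl : (fun j => p k Q (v j)) = n := funext hv
  obtain ⟨i, hi⟩ | ⟨r, hr, hlt⟩ := hdep
  · exact ⟨i, Or.inl hi⟩
  · obtain ⟨i, D, h⟩ := exists_isLeadingRelation hr hlt
    obtain ⟨r', D', h', hdeg⟩ := h.exists_pdeg_eq_zero hμ hT fun j hj => hmono j i hj
    exact ⟨i, h'.depOn_of_pdeg_eq_zero hμ hdeg (hm i)⟩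

end WeakAlgorithm

end LPA

open LPA in
/-- Let `M` be a free left `P_k(E)`-module freely generated by `B` (realized as
`B →₀ P_k(E)`), and let `μ₀ : B → ℕ`.  Extend `μ₀` to `M` as the formal degree
`μ (∑ r_b · b) = max_b (ν (r_b) + μ₀ b)`, where `ν` is the path-length degree.  Then `(M, μ)`
is a filtered `P_k(E)`-module and satisfies the weak algorithm relative to `μ` and the set of
vertices `P = {p_1, …, p_d}`. -/
theorem statement_2 (k : Type) [Field k] (Q : FinQuiver) (B : Type) (μ₀ : B → ℕ)
    (μ : (B →₀ PathAlg k Q) → WithBot ℕ)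
    (hμ : ∀ m : B →₀ PathAlg k Q,
      μ m = m.support.sup fun b => pdeg k Q (m b) + (μ₀ b : WithBot ℕ)) :
    IsModuleFiltration (pdeg k Q) μ ∧ WeakAlgorithm (pdeg k Q) (vertexFinset k Q) μ := by
  obtain rfl : μ = formalDegree (pdeg k Q) μ₀ := funext hμ
  have hfilt : IsModuleFiltration (pdeg k Q) (formalDegree (pdeg k Q) μ₀) :=
    isModuleFiltration_formalDegree isModuleFiltration_pdeg μ₀
  exact ⟨hfilt, weakAlgorithm_of_forall_exists_isTransduction hfilt fun e =>
    ⟨_, isTransduction_mapRange μ₀ e⟩⟩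
end

section
/- Let (R,ν) be a filtered ring with a set of vertices P. If R satisfies the weak algorithm relative to ν and P, then the subring R_0 = {r ∈ R : ν(r) ≤ 0} is a semisimple ring; indeed R_0 = ⊕_{p∈P} R_0 p is a decomposition into simple left ideals. -/
/-!
Let `0 ≠ x ∈ R₀ p` and choose `q ∈ P` with `q x ≠ 0`. The relation `q (q x) - (q x) p = 0` makes
the pair `(q x, p)` of elements of degree `0` dependent, so the weak algorithm yields `r` with
`ν (p - r q x) < 0`, that is `p = r q x`. Hence every nonzero element of `R₀ p` generates it, and
`R₀ p` is simple.
-/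

section OrthogonalIdempotents

variable {A ι : Type*}

theorem iSupIndep_span_of_orthogonalIdempotents [Semiring A] {e : ι → A}
    (he : OrthogonalIdempotents e) : iSupIndep fun i ↦ Submodule.span A {e i} := by
  intro i
  -- Right multiplication by `e i` kills every `A e j` with `j ≠ i` and is the identity on `A e i`.
  have others_le_ker : ⨆ (j) (_ : j ≠ i), Submodule.span A {e j} ≤
      LinearMap.ker (LinearMap.toSpanSingleton A A (e i)) := by
    simp only [iSup_le_iff, Submodule.span_singleton_le_iff_mem, LinearMap.mem_ker]
    exact fun j hj ↦ he.ortho hj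
  rw [Submodule.disjoint_def]
  intro x hx hx'
  obtain ⟨c, rfl⟩ := Submodule.mem_span_singleton.mp hx
  have hker : c * e i * e i = 0 := others_le_ker hx'
  rwa [mul_assoc, (he.idem i).eq] at hker

theorem isInternal_span_of_completeOrthogonalIdempotents [Ring A] [Fintype ι] [DecidableEq ι]
    {e : ι → A} (he : CompleteOrthogonalIdempotents e) :
    DirectSum.IsInternal fun i ↦ Submodule.span A {e i} := by
  refine DirectSum.isInternal_submodule_of_iSupIndep_of_iSup_eq_top
    (iSupIndep_span_of_orthogonalIdempotents he.toOrthogonalIdempotents) ?_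
  rw [Ideal.eq_top_iff_one, ← he.complete]
  exact Submodule.sum_mem _ fun i _ ↦
    Submodule.mem_iSup_of_mem i (Submodule.mem_span_singleton_self _)

theorem isSimpleModule_span_of_isIdempotentElem [Ring A] {e : A} (he : IsIdempotentElem e)
    (he0 : e ≠ 0) (h : ∀ x : A, x ≠ 0 → x * e = x → ∃ y, y * x = e) :
    IsSimpleModule A (Submodule.span A {e}) := by
  rw [isSimpleModule_iff_toSpanSingleton_surjective]
  refine ⟨Submodule.nontrivial_iff_ne_bot.mpr (by simpa using he0), ?_⟩
  rintro ⟨x, hx⟩ hx0 ⟨z, hz⟩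
  obtain ⟨c, rfl⟩ := Submodule.mem_span_singleton.mp hx
  obtain ⟨d, rfl⟩ := Submodule.mem_span_singleton.mp hz
  have hxe : c • e * e = c • e := by rw [smul_mul_assoc, he.eq]
  obtain ⟨y, hy⟩ := h (c • e) (by simpa using hx0) hxe
  refine ⟨d * y, Subtype.ext ?_⟩
  calc (d * y) • c • e = d • (y * c • e) := mul_smul d y (c • e)
    _ = d • e := by rw [hy]

end OrthogonalIdempotents

namespace LPA

variable {R : Type} [Ring R] {M : Type} [AddCommGroup M] [Module R M]
  {ν : R → WithBot ℕ} {μ : M → WithBot ℕ} {P : Finset R}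

/-- The `k`-term weak algorithm, in the sense of P. M. Cohn: the condition of the weak algorithm,
required only of families with at most `k` members. -/
def NTermWeakAlgorithm (ν : R → WithBot ℕ) (P : Finset R) (μ : M → WithBot ℕ) (k : ℕ) : Prop :=
  ∀ ℓ ≤ k, ∀ (n : Fin ℓ → R) (m : Fin ℓ → M),
    (∀ i, n i ∈ P) → (∀ i, n i • m i = m i) →
    (∀ i j : Fin ℓ, i ≤ j → μ (m i) ≤ μ (m j)) →
    DepFamily ν μ n m →
    ∃ i : Fin ℓ, DepOn ν μ (fun j : {j : Fin ℓ // j < i} ↦ n j.1)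
      (fun j : {j : Fin ℓ // j < i} ↦ m j.1) (m i)

theorem WeakAlgorithm.nTerm (h : WeakAlgorithm ν P μ) (k : ℕ) : NTermWeakAlgorithm ν P μ k :=
  fun ℓ _ ↦ h ℓ

namespace IsRingFiltration

theorem isModuleFiltration_self (hν : IsRingFiltration ν) : IsModuleFiltration ν ν where
  map_zero := hν.map_zero
  nonneg := hν.nonneg
  sub_le := hν.sub_le
  smul_le := hν.mul_le

theorem eq_zero_of_neg (hν : IsRingFiltration ν) {x : R} (hx : ν x < 0) : x = 0 :=
  not_imp_comm.mp (hν.nonneg x) hx.not_ge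

theorem mul_nonpos (hν : IsRingFiltration ν) {x y : R} (hx : ν x ≤ 0) (hy : ν y ≤ 0) :
    ν (x * y) ≤ 0 :=
  (hν.mul_le x y).trans (add_nonpos hx hy)

end IsRingFiltration

namespace IsVertexSet

theorem ne_zero (hP : IsVertexSet ν P) (hν : IsRingFiltration ν) {p : R} (hp : p ∈ P) :
    p ≠ 0 := by
  rintro rfl
  exact WithBot.bot_ne_coe (hν.map_zero.symm.trans (hP.deg_eq_zero 0 hp))

theorem completeOrthogonalIdempotents (hP : IsVertexSet ν P) :
    CompleteOrthogonalIdempotents ((↑) : {p // p ∈ P} → R) where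
  idem p := hP.idem p p.2
  ortho p q hpq := hP.orthogonal p p.2 q q.2 (Subtype.coe_ne_coe.mpr hpq)
  complete := (Finset.sum_coe_sort P id).trans hP.sum_eq_one

theorem exists_mul_ne_zero (hP : IsVertexSet ν P) {x : R} (hx : x ≠ 0) :
    ∃ q ∈ P, q * x ≠ 0 := by
  refine Finset.exists_ne_zero_of_sum_ne_zero ?_
  rwa [← Finset.sum_mul, hP.sum_eq_one, one_mul]

end IsVertexSet

theorem depFamily_of_sum_smul_eq_zero (hν : IsRingFiltration ν) (hμ : IsModuleFiltration ν μ)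
    {I : Type} {n : I → R} {m : I → M} {r : I →₀ R} (hr0 : r ≠ 0) (hr : ∀ i, r i * n i = r i)
    (hsum : (r.sum fun i ri ↦ ri • m i) = 0) : DepFamily ν μ n m := by
  refine or_iff_not_imp_left.mpr fun hm ↦ ⟨r, hr, ?_⟩
  obtain ⟨i, hi⟩ := Finsupp.ne_iff.mp hr0
  rw [hsum, hμ.map_zero]
  calc ⊥ < 0 := WithBot.bot_lt_coe 0
    _ ≤ ν (r i) + μ (m i) := add_nonneg (hν.nonneg _ hi) (hμ.nonneg _ fun h ↦ hm ⟨i, h⟩)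
    _ ≤ r.support.sup fun i ↦ ν (r i) + μ (m i) :=
      Finset.le_sup (f := fun i ↦ ν (r i) + μ (m i)) (Finsupp.mem_support_iff.mpr hi)

theorem depFamily_pair_of_smul_eq_smul (hν : IsRingFiltration ν) (hμ : IsModuleFiltration ν μ)
    {p q s t : R} {a b : M} (hs0 : s ≠ 0) (hs : s * p = s) (ht : t * q = t)
    (hst : s • a = t • b) : DepFamily ν μ ![p, q] ![a, b] := by
  refine depFamily_of_sum_smul_eq_zero hν hμ (r := Finsupp.equivFunOnFinite.symm ![s, -t])
    (fun h ↦ hs0 (DFunLike.congr_fun h 0)) ?_ ?_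
  · simp [Fin.forall_fin_two, hs, ht]
  · simp [Finsupp.sum_fintype, Fin.sum_univ_two, hst]

theorem depOn_iff_of_isEmpty {I : Type} [IsEmpty I] {n : I → R} {m : I → M} {x : M} :
    DepOn ν μ n m x ↔ x = 0 := by
  simp [DepOn, Finsupp.sum, Finset.eq_empty_of_isEmpty]

theorem depOn_iff_of_unique {I : Type} [Unique I] {n : I → R} {m : I → M} {x : M} :
    DepOn ν μ n m x ↔ x = 0 ∨ ∃ r : R, r * n default = r ∧
      μ (x - r • m default) < μ x ∧ ν r + μ (m default) ≤ μ x := by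
  simp [DepOn, Finsupp.sum_fintype, Unique.forall_iff,
    (Finsupp.uniqueEquiv (default : I)).exists_congr_left]

theorem NTermWeakAlgorithm.exists_sub_smul_lt (h : NTermWeakAlgorithm ν P μ 2) {p q : R}
    (hp : p ∈ P) (hq : q ∈ P) {a b : M} (ha : p • a = a) (hb : q • b = b) (ha0 : a ≠ 0)
    (hb0 : b ≠ 0) (hab : μ a ≤ μ b) (hdep : DepFamily ν μ ![p, q] ![a, b]) :
    ∃ r : R, r * p = r ∧ μ (b - r • a) < μ b ∧ ν r + μ a ≤ μ b := by
  obtain ⟨i, hi⟩ := h 2 le_rfl ![p, q] ![a, b] (by simp [Fin.forall_fin_two, hp, hq])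
    (by simp [Fin.forall_fin_two, ha, hb]) (by simp [Fin.forall_fin_two, hab]) hdep
  match i with
  | 0 =>
    have : IsEmpty {j : Fin 2 // j < 0} := ⟨fun j ↦ Fin.not_lt_zero _ j.2⟩
    exact absurd (depOn_iff_of_isEmpty.mp hi) ha0
  | 1 =>
    let : Unique {j : Fin 2 // j < 1} :=
      { default := ⟨0, Fin.zero_lt_one⟩
        uniq := fun j ↦ Subtype.ext ((Fin.lt_one_iff _).mp j.2) }
    exact (depOn_iff_of_unique.mp hi).resolve_left hb0

theorem NTermWeakAlgorithm.exists_mul_eq_vertex (hWA : NTermWeakAlgorithm ν P ν 2)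
    (hν : IsRingFiltration ν) (hP : IsVertexSet ν P) {p x : R} (hp : p ∈ P) (hx0 : x ≠ 0)
    (hxp : x * p = x) (hx : ν x ≤ 0) : ∃ y, ν y ≤ 0 ∧ y * x = p := by
  obtain ⟨q, hq, hqx⟩ := hP.exists_mul_ne_zero hx0
  have hνp : ν p = 0 := hP.deg_eq_zero p hp
  have hνqx : ν (q * x) = 0 :=
    le_antisymm (hν.mul_nonpos (hP.deg_eq_zero q hq).le hx) (hν.nonneg _ hqx)
  have hqqx : q * (q * x) = q * x := by rw [← mul_assoc, hP.idem q hq]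
  have hqxp : q * x * p = q * x := by rw [mul_assoc, hxp]
  have hdep : DepFamily ν ν ![q, p] ![q * x, p] :=
    depFamily_pair_of_smul_eq_smul hν hν.isModuleFiltration_self (hP.ne_zero hν hq)
      (hP.idem q hq) hqxp (hqqx.trans hqxp.symm)
  obtain ⟨r, hrq, hlt, hle⟩ := hWA.exists_sub_smul_lt hq hp hqqx (hP.idem p hp) hqx
    (hP.ne_zero hν hp) (hνqx.trans hνp.symm).le hdep
  rw [hνp] at hlt
  rw [hνp, hνqx, add_zero] at hle
  refine ⟨r, hle, ?_⟩
  calc r * x = r * (q * x) := by rw [← mul_assoc, hrq]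
    _ = p := (sub_eq_zero.mp (hν.eq_zero_of_neg hlt)).symm

end LPA

open LPA in
theorem statement_4_general {R : Type} [Ring R] [DecidableEq R]
    (ν : R → WithBot ℕ) (P : Finset R)
    (hν : IsRingFiltration ν) (hP : IsVertexSet ν P)
    (hWA : NTermWeakAlgorithm ν P ν 2)
    (R0 : Subring R) (hR0 : ∀ r : R, r ∈ R0 ↔ ν r ≤ 0) :
    IsSemisimpleRing ↥R0 ∧
      ∀ f : {p : R // p ∈ P} → Submodule ↥R0 ↥R0,
        (∀ p : {p : R // p ∈ P},
          f p = Submodule.span ↥R0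
            {(⟨p.1, (hR0 p.1).mpr (le_of_eq (hP.deg_eq_zero p.1 p.2))⟩ : ↥R0)}) →
        DirectSum.IsInternal f ∧ ∀ p, IsSimpleModule ↥R0 ↥(f p) := by
  let e (p : {p // p ∈ P}) : R0 := ⟨p, (hR0 p).mpr (hP.deg_eq_zero p p.2).le⟩
  have he : CompleteOrthogonalIdempotents e :=
    (CompleteOrthogonalIdempotents.map_injective_iff R0.subtype R0.subtype_injective).mp
      hP.completeOrthogonalIdempotents
  have internal := isInternal_span_of_completeOrthogonalIdempotents he
  have simple (p) : IsSimpleModule R0 (Submodule.span R0 {e p}) := by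
    refine isSimpleModule_span_of_isIdempotentElem (he.idem p)
      (fun h ↦ hP.ne_zero hν p.2 (congrArg Subtype.val h)) fun x hx0 hxp ↦ ?_
    obtain ⟨y, hy, hyx⟩ := hWA.exists_mul_eq_vertex hν hP p.2 (Subtype.coe_ne_coe.mpr hx0)
      (congrArg Subtype.val hxp) ((hR0 x).mp x.2)
    exact ⟨⟨y, (hR0 y).mpr hy⟩, Subtype.ext hyx⟩
  refine ⟨isSemisimpleModule_of_isSemisimpleModule_submodule' (fun _ ↦ inferInstance)
    internal.submodule_iSup_eq_top, fun f hf ↦ ?_⟩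
  obtain rfl : f = fun p ↦ Submodule.span R0 {e p} := funext hf
  exact ⟨internal, simple⟩

open LPA in
/-- If `(R, ν)` is a filtered ring with a set of vertices `P` satisfying the weak
algorithm (relative to `ν`, viewing `R` as a filtered module over itself, and `P`), then the
subring `R₀ = {r | ν r ≤ 0}` is semisimple; indeed `R₀ = ⊕_{p ∈ P} R₀·p` is a decomposition
into simple left ideals. -/
theorem statement_4 {R : Type} [Ring R] [DecidableEq R]
    (ν : R → WithBot ℕ) (P : Finset R)
    (hν : IsRingFiltration ν) (hP : IsVertexSet ν P)
    (hWA : WeakAlgorithm ν P ν)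
    (R0 : Subring R) (hR0 : ∀ r : R, r ∈ R0 ↔ ν r ≤ 0) :
    IsSemisimpleRing ↥R0 ∧
      ∀ f : {p : R // p ∈ P} → Submodule ↥R0 ↥R0,
        (∀ p : {p : R // p ∈ P},
          f p = Submodule.span ↥R0
            {(⟨p.1, (hR0 p.1).mpr (le_of_eq (hP.deg_eq_zero p.1 p.2))⟩ : ↥R0)}) →
        DirectSum.IsInternal f ∧ ∀ p, IsSimpleModule ↥R0 ↥(f p) :=
  statement_4_general ν P hν hP (hWA.nTerm 2) R0 hR0
end
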